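/- Let Q be a D-dimensional convex polytope in ℝ^D with m vertices (i.e., the affine hull of Q is all of ℝ^D). Then Q is locally point symmetric if and only if Q has exactly m/2 pairs of strictly antipodal vertices. -/

import Mathlib

open scoped Pointwise

noncomputable section

/-- Points of `ℝ^D` with the Euclidean metric. -/
abbrev Pt (D : ℕ) := EuclideanSpace ℝ (Fin D)

/-- `L(S)`: the set of lattice points of `S`, i.e. points of `S` all of whose
coordinates are integers. -/
def latticePts {D : ℕ} (S : Set (Pt D)) : Set (Pt D) :=
  {x | x ∈ S ∧ ∀ i, ∃ z : ℤ, x i = (z : ℝ)}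

/-- A convex polytope: the convex hull of a finite set of points. -/
def IsPolytope {D : ℕ} (P : Set (Pt D)) : Prop :=
  ∃ V : Set (Pt D), V.Finite ∧ P = convexHull ℝ V

/-- A convex polytope whose vertices (extreme points) all lie in `ℤ^D`. -/
def IsLatticePolytope {D : ℕ} (P : Set (Pt D)) : Prop :=
  IsPolytope P ∧ ∀ v ∈ Set.extremePoints ℝ P, ∀ i, ∃ z : ℤ, v i = (z : ℝ)

/-- `u` and `v` are strictly antipodal vertices of `Q`: there are parallel supporting
hyperplanes `H₁, H₂` of `Q` (with common normal functional `f`) such that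
`H₁ ∩ Q = {u}` and `H₂ ∩ Q = {v}`. -/
def StrictlyAntipodal {D : ℕ} (Q : Set (Pt D)) (u v : Pt D) : Prop :=
  ∃ f : Pt D →ₗ[ℝ] ℝ, f ≠ 0 ∧
    {x | x ∈ Q ∧ ∀ y ∈ Q, f y ≤ f x} = {u} ∧
    {x | x ∈ Q ∧ ∀ y ∈ Q, f x ≤ f y} = {v}

/-- The supporting cone of `Q` at `v`: `v + ⋃_{λ ≥ 0} λ (Q - v)`. -/
def suppCone {D : ℕ} (Q : Set (Pt D)) (v : Pt D) : Set (Pt D) :=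
  {v} + ⋃ (l : ℝ) (_ : 0 ≤ l), l • (Q - ({v} : Set (Pt D)))

/-- `Q` is locally point symmetric: its vertices can be partitioned into pairs
(given by a fixed-point-free involution `σ` of the vertex set) of strictly antipodal
vertices such that each pair `{u, v}` satisfies `C(u) - u = v - C(v)`. -/
def LocallyPointSymmetric {D : ℕ} (Q : Set (Pt D)) : Prop :=
  ∃ σ : Pt D → Pt D, ∀ v ∈ Set.extremePoints ℝ Q,
    σ v ∈ Set.extremePoints ℝ Q ∧ σ v ≠ v ∧ σ (σ v) = v ∧
    StrictlyAntipodal Q v (σ v) ∧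
    suppCone Q v - ({v} : Set (Pt D)) = ({σ v} : Set (Pt D)) - suppCone Q (σ v)

/-- `E` is an edge of `Q`: a 1-dimensional face, i.e. the intersection of `Q` with a
supporting hyperplane which is 1-dimensional. -/
def IsEdge {D : ℕ} (Q E : Set (Pt D)) : Prop :=
  (∃ f : Pt D →ₗ[ℝ] ℝ, f ≠ 0 ∧ E = {x | x ∈ Q ∧ ∀ y ∈ Q, f y ≤ f x}) ∧
    Module.finrank ℝ (affineSpan ℝ E).direction = 1

/-- `B_r(Q)`: lattice points of `Q` within distance `r` of some vertex of `Q`. -/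
def ballFringe {D : ℕ} (Q : Set (Pt D)) (r : ℝ) : Set (Pt D) :=
  {q | q ∈ latticePts Q ∧ ∃ v ∈ Set.extremePoints ℝ Q, dist q v ≤ r}

/-- `M_r(Q) = L(Q) \ B_r(Q)`: the middle lattice points of `Q`. -/
def middlePts {D : ℕ} (Q : Set (Pt D)) (r : ℝ) : Set (Pt D) :=
  latticePts Q \ ballFringe Q r

/-- `P` is point symmetric: `P = x - P` for some point `x`. -/
def PointSymmetric {D : ℕ} (P : Set (Pt D)) : Prop :=
  ∃ x : Pt D, P = ({x} : Set (Pt D)) - P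

open Filter Topology

section Functionals

variable {E : Type*} [AddCommGroup E] [Module ℝ E]

/-- A linear functional that is strictly maximized over a set of points at `u` is strictly
maximized at `u` over the convex hull. -/
theorem lt_of_mem_convexHull_of_forall_lt {A : Set E} {u : E} {f : E →ₗ[ℝ] ℝ}
    (hf : ∀ w ∈ A, w ≠ u → f w < f u) {y : E} (hy : y ∈ convexHull ℝ A) (hyu : y ≠ u) :
    f y < f u := by
  have hconv : Convex ℝ {y | y = u ∨ f y < f u} := by
    rw [convex_iff_forall_pos]
    rintro x hx y hy a b ha hb hab
    have hfu : f u = a * f u + b * f u := by rw [← add_mul, hab, one_mul]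
    rcases hx with rfl | hx
    · rcases hy with rfl | hy
      · left
        rw [← add_smul, hab, one_smul]
      · right
        simp only [map_add, map_smul, smul_eq_mul]
        nlinarith
    · right
      have hy' : f y ≤ f u := by
        rcases hy with rfl | hy
        exacts [le_rfl, hy.le]
      simp only [map_add, map_smul, smul_eq_mul]
      nlinarith
  have hsub : A ⊆ {y | y = u ∨ f y < f u} := fun w hw =>
    (em (w = u)).imp_right (hf w hw)
  exact (convexHull_min hsub hconv hy).resolve_left hyu

/-- A functional on a vector space can be perturbed in a fixed direction such that all small
perturbations are injective on a given finite set. -/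
theorem exists_eventually_injOn_add_smul {A : Set E} (hA : A.Finite) (f : E →ₗ[ℝ] ℝ) :
    ∃ g : E →ₗ[ℝ] ℝ, ∀ᶠ ε in 𝓝[>] (0 : ℝ), Set.InjOn (f + ε • g : E →ₗ[ℝ] ℝ) A := by
  have : Finite A := hA
  obtain ⟨g, hg⟩ := Module.exists_dual_forall_apply_ne_zero (K := ℝ)
    (fun p : {p : A × A // p.1 ≠ p.2} => ((p.1.1 : E) - p.1.2))
    (fun p => sub_ne_zero.2 fun h => p.2 (Subtype.ext h))
  refine ⟨g, ?_⟩
  have key : ∀ a ∈ A, ∀ b ∈ A, ∀ᶠ ε in 𝓝[>] (0 : ℝ),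
      (f + ε • g) a = (f + ε • g) b → a = b := by
    intro a ha b hb
    by_cases hab : a = b
    · exact Eventually.of_forall fun _ _ => hab
    have hgab : g (a - b) ≠ 0 := hg ⟨(⟨a, ha⟩, ⟨b, hb⟩), fun h => hab (congrArg Subtype.val h)⟩
    have hne : ∀ᶠ ε in 𝓝[>] (0 : ℝ), ε ≠ -f (a - b) / g (a - b) := by
      by_cases h0 : -f (a - b) / g (a - b) = 0
      · rw [h0]
        filter_upwards [self_mem_nhdsWithin] with ε hε using ne_of_gt hε
      · exact nhdsWithin_le_nhds (isOpen_ne.mem_nhds (Ne.symm h0))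
    filter_upwards [hne] with ε hε h
    refine absurd ?_ hε
    rw [eq_div_iff hgab]
    simp only [LinearMap.add_apply, LinearMap.smul_apply, smul_eq_mul] at h
    rw [map_sub, map_sub]
    linarith
  have := hA.eventually_all.2 fun a ha => hA.eventually_all.2 (key a ha)
  filter_upwards [this] with ε hε a ha b hb h using hε a ha b hb h

theorem tendsto_add_smul_apply (f g : E →ₗ[ℝ] ℝ) (x : E) :
    Tendsto (fun ε : ℝ => (f + ε • g) x) (𝓝[>] 0) (𝓝 (f x)) := by
  have : Continuous fun ε : ℝ => f x + ε * g x := by fun_prop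
  simpa using (this.tendsto 0).mono_left nhdsWithin_le_nhds

theorem eventually_lt_add_smul {A : Set E} (hA : A.Finite) {v : E} {f : E →ₗ[ℝ] ℝ}
    (hf : ∀ w ∈ A, w ≠ v → f w < f v) (g : E →ₗ[ℝ] ℝ) :
    ∀ᶠ ε in 𝓝[>] (0 : ℝ), ∀ w ∈ A, w ≠ v → (f + ε • g) w < (f + ε • g) v := by
  refine hA.eventually_all.2 fun w hw => ?_
  by_cases hwv : w = v
  · exact Eventually.of_forall fun _ h => absurd hwv h
  · filter_upwards [(tendsto_add_smul_apply f g w).eventually_lt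
      (tendsto_add_smul_apply f g v) (hf w hw hwv)] with ε hε _ using hε

end Functionals

section Separation

variable {E : Type*} [NormedAddCommGroup E] [NormedSpace ℝ E]

/-- Gordan's alternative: a finite set whose convex hull avoids the origin lies in an open
half-space. -/
theorem exists_forall_lt_zero_of_notMem_convexHull {S : Set E} (hS : S.Finite)
    (h0 : (0 : E) ∉ convexHull ℝ S) : ∃ f : E →ₗ[ℝ] ℝ, ∀ s ∈ S, f s < 0 := by
  obtain ⟨f, c, hf, hc⟩ := geometric_hahn_banach_closed_point (convex_convexHull ℝ S)
    (hS.isClosed_convexHull ℝ) h0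
  rw [map_zero] at hc
  exact ⟨f, fun s hs => (hf s (subset_convexHull ℝ S hs)).trans hc⟩

theorem mem_convexHull_sub_singleton {A : Set E} {v y : E} :
    y ∈ convexHull ℝ (A - {v}) ↔ y + v ∈ convexHull ℝ A := by
  rw [convexHull_sub, convexHull_singleton, Set.sub_singleton]
  constructor
  · rintro ⟨z, hz, rfl⟩
    simpa using hz
  · exact fun h => ⟨_, h, by simp⟩

theorem exists_strict_max {A : Set E} (hA : A.Finite) {v : E}
    (hv : v ∉ convexHull ℝ (A \ {v})) :
    ∃ f : E →ₗ[ℝ] ℝ, ∀ w ∈ A, w ≠ v → f w < f v := by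
  obtain ⟨f, hf⟩ := exists_forall_lt_zero_of_notMem_convexHull
    (hA.sdiff.sub (Set.finite_singleton v)) (S := A \ {v} - {v})
    (by rwa [mem_convexHull_sub_singleton, zero_add])
  refine ⟨f, fun w hw hwv => ?_⟩
  have := hf _ (Set.sub_mem_sub (⟨hw, hwv⟩ : w ∈ A \ {v}) (Set.mem_singleton v))
  rw [map_sub] at this
  linarith

/-- A direction outside the cone of `A` at `v` is separated from that cone by a functional which
is strictly maximized over `A` at `v`. -/
theorem exists_strict_max_pos {A : Set E} (hA : A.Finite) {v : E} (hne : (A \ {v}).Nonempty)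
    (hv : v ∉ convexHull ℝ (A \ {v})) {x : E}
    (hx : ∀ l : ℝ, 0 ≤ l → ∀ q ∈ convexHull ℝ A, x ≠ l • (q - v)) :
    ∃ f : E →ₗ[ℝ] ℝ, (∀ w ∈ A, w ≠ v → f w < f v) ∧ 0 < f x := by
  have h0 : (0 : E) ∉ convexHull ℝ (insert (-x) (A \ {v} - {v})) := by
    rw [convexHull_insert (hne.sub (Set.singleton_nonempty v)), convexJoin_singleton_left]
    simp only [Set.mem_iUnion, not_exists]
    rintro y hy ⟨a, b, ha, hb, hab, h⟩
    rw [mem_convexHull_sub_singleton] at hy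
    rcases ha.eq_or_lt with rfl | ha
    · rw [zero_add] at hab
      rw [hab, zero_smul, zero_add, one_smul] at h
      rw [h, zero_add] at hy
      exact hv hy
    · refine hx (b / a) (by positivity) (y + v) (convexHull_mono Set.sdiff_subset hy) ?_
      have h' : a • x = b • y := by
        rw [smul_neg] at h
        exact (neg_add_eq_zero.1 h)
      rw [add_sub_cancel_right, div_eq_inv_mul, mul_smul, ← h', inv_smul_smul₀ ha.ne']
  obtain ⟨f, hf⟩ := exists_forall_lt_zero_of_notMem_convexHull
    ((hA.sdiff.sub (Set.finite_singleton v)).insert _) h0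
  refine ⟨f, fun w hw hwv => ?_, ?_⟩
  · have := hf _ (Set.mem_insert_of_mem _
      (Set.sub_mem_sub (⟨hw, hwv⟩ : w ∈ A \ {v}) (Set.mem_singleton v)))
    rw [map_sub] at this
    linarith
  · have := hf _ (Set.mem_insert _ _)
    rw [map_neg] at this
    linarith

end Separation

section Counting

/-- Handshaking for a symmetric relation on a finite set, with edges recorded as two-element
sets: the number of edges is half the number of points if every point has exactly one partner,
and conversely as soon as every point has a partner. -/
theorem two_mul_ncard_pairs_eq_iff {α : Type*} {A : Set α} (hA : A.Finite) {r : α → α → Prop}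
    (hr : ∀ u v, r u v → r v u) :
    ((∀ u ∈ A, ∃! v, v ∈ A ∧ u ≠ v ∧ r u v) →
      2 * {p : Set α | ∃ u v, u ≠ v ∧ u ∈ A ∧ v ∈ A ∧ r u v ∧ p = {u, v}}.ncard = A.ncard) ∧
    (2 * {p : Set α | ∃ u v, u ≠ v ∧ u ∈ A ∧ v ∈ A ∧ r u v ∧ p = {u, v}}.ncard = A.ncard →
      (∀ u ∈ A, ∃ v ∈ A, u ≠ v ∧ r u v) → ∀ u ∈ A, ∃! v, v ∈ A ∧ u ≠ v ∧ r u v) := by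
  classical
  have : Fintype A := hA.fintype
  let G : SimpleGraph A :=
    { Adj := fun u v => u ≠ v ∧ r u v
      symm := ⟨fun u v h => ⟨h.1.symm, hr _ _ h.2⟩⟩
      loopless := ⟨fun u h => h.1 rfl⟩ }
  let toSet : Sym2 A → Set α := fun e => {x | ∃ h : x ∈ A, (⟨x, h⟩ : A) ∈ e}
  have toSet_mk : ∀ u v : A, toSet s(u, v) = {(u : α), (v : α)} := by
    intro u v
    ext x
    simp only [toSet, Sym2.mem_iff, Set.mem_ofPred_eq, Set.mem_insert_iff,
      Set.mem_singleton_iff, Subtype.ext_iff]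
    constructor
    · rintro ⟨_, h⟩
      exact h
    · rintro (rfl | rfl)
      exacts [⟨u.2, Or.inl rfl⟩, ⟨v.2, Or.inr rfl⟩]
  have toSet_inj : Function.Injective toSet := by
    intro e e' h
    refine Sym2.ext fun x => ?_
    have := Set.ext_iff.1 h x
    simpa [toSet] using this
  have hpairs : {p : Set α | ∃ u v, u ≠ v ∧ u ∈ A ∧ v ∈ A ∧ r u v ∧ p = {u, v}} =
      toSet '' G.edgeSet := by
    ext p
    constructor
    · rintro ⟨u, v, huv, hu, hv, h, rfl⟩
      refine ⟨s(⟨u, hu⟩, ⟨v, hv⟩), ?_, toSet_mk _ _⟩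
      rw [SimpleGraph.mem_edgeSet]
      exact ⟨fun h => huv (congrArg Subtype.val h), h⟩
    · rintro ⟨e, he, rfl⟩
      induction e using Sym2.ind with
      | _ u v =>
        rw [SimpleGraph.mem_edgeSet] at he
        exact ⟨u, v, fun h => he.1 (Subtype.ext h), u.2, v.2, he.2, toSet_mk _ _⟩
  have hsum : 2 * {p : Set α | ∃ u v, u ≠ v ∧ u ∈ A ∧ v ∈ A ∧ r u v ∧ p = {u, v}}.ncard =
      ∑ u, G.degree u := by
    rw [hpairs, Set.ncard_image_of_injective _ toSet_inj, G.sum_degrees_eq_twice_card_edges,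
      ← SimpleGraph.coe_edgeFinset, Set.ncard_coe_finset]
  have hcard : A.ncard = ∑ _u : A, 1 := by
    rw [Finset.sum_const, smul_eq_mul, mul_one, Finset.card_univ, ← Nat.card_eq_fintype_card,
      Nat.card_coe_set_eq]
  have hdeg : ∀ u : A, G.degree u = 1 ↔ ∃! v, v ∈ A ∧ (u : α) ≠ v ∧ r u v := by
    intro u
    rw [SimpleGraph.degree_eq_one_iff_existsUnique_adj]
    constructor
    · rintro ⟨v, hv, huniq⟩
      exact ⟨v, ⟨v.2, fun h => hv.1 (Subtype.ext h), hv.2⟩, fun w hw =>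
        congrArg Subtype.val
          (huniq ⟨w, hw.1⟩ ⟨fun h => hw.2.1 (congrArg Subtype.val h), hw.2.2⟩)⟩
    · rintro ⟨v, hv, huniq⟩
      exact ⟨⟨v, hv.1⟩, ⟨fun h => hv.2.1 (congrArg Subtype.val h), hv.2.2⟩, fun w hw =>
        Subtype.ext (huniq w ⟨w.2, fun h => hw.1 (Subtype.ext h), hw.2⟩)⟩
  rw [hsum, hcard]
  constructor
  · exact fun h => Finset.sum_congr rfl fun u _ => (hdeg u).2 (h u u.2)
  · intro h hex u hu
    refine (hdeg ⟨u, hu⟩).1 ?_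
    refine ((Finset.sum_eq_sum_iff_of_le fun v _ => ?_).1 h.symm ⟨u, hu⟩
      (Finset.mem_univ _)).symm
    obtain ⟨w, hw, hvw, hr'⟩ := hex v v.2
    exact (G.degree_pos_iff_exists_adj v).2
      ⟨⟨w, hw⟩, fun h => hvw (congrArg Subtype.val h), hr'⟩

end Counting

section Polytopes

variable {D : ℕ} {Q : Set (Pt D)}

theorem IsPolytope.finite_extremePoints (hQ : IsPolytope Q) : (Set.extremePoints ℝ Q).Finite := by
  obtain ⟨V, hV, rfl⟩ := hQ
  exact hV.subset extremePoints_convexHull_subset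

theorem IsPolytope.convexHull_extremePoints (hQ : IsPolytope Q) :
    convexHull ℝ (Set.extremePoints ℝ Q) = Q := by
  rw [← (hQ.finite_extremePoints.isClosed_convexHull ℝ).closure_eq]
  obtain ⟨V, hV, rfl⟩ := hQ
  exact closure_convexHull_extremePoints (hV.isCompact_convexHull ℝ) (convex_convexHull ℝ V)

theorem IsPolytope.notMem_convexHull_extremePoints_sdiff (hQ : IsPolytope Q) {v : Pt D}
    (hv : v ∈ Set.extremePoints ℝ Q) : v ∉ convexHull ℝ (Set.extremePoints ℝ Q \ {v}) := by
  have hconv : Convex ℝ Q := by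
    obtain ⟨V, -, rfl⟩ := hQ
    exact convex_convexHull ℝ V
  exact convexIndependent_set_iff_notMem_convexHull_sdiff.1
    hconv.convexIndependent_extremePoints v hv

theorem strictlyAntipodal_iff {u v : Pt D} : StrictlyAntipodal Q u v ↔
    ∃ f : Pt D →ₗ[ℝ] ℝ, f ≠ 0 ∧ u ∈ Q ∧ v ∈ Q ∧
      (∀ y ∈ Q, y ≠ u → f y < f u) ∧ ∀ y ∈ Q, y ≠ v → f v < f y := by
  unfold StrictlyAntipodal
  refine exists_congr fun f => and_congr_right fun _ => ?_
  constructor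
  · rintro ⟨hu, hv⟩
    have hu' : u ∈ {x | x ∈ Q ∧ ∀ y ∈ Q, f y ≤ f x} := hu ▸ rfl
    have hv' : v ∈ {x | x ∈ Q ∧ ∀ y ∈ Q, f x ≤ f y} := hv ▸ rfl
    refine ⟨hu'.1, hv'.1, fun y hy hyu => ?_, fun y hy hyv => ?_⟩
    · by_contra! h
      exact hyu (hu.subset ⟨hy, fun z hz => (hu'.2 z hz).trans h⟩)
    · by_contra! h
      exact hyv (hv.subset ⟨hy, fun z hz => h.trans (hv'.2 z hz)⟩)
  · rintro ⟨hu, hv, hfu, hfv⟩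
    refine ⟨Set.Subset.antisymm (fun x hx => ?_) ?_, Set.Subset.antisymm (fun x hx => ?_) ?_⟩
    · by_contra h
      exact (hfu x hx.1 h).not_ge (hx.2 u hu)
    · refine Set.singleton_subset_iff.2 ⟨hu, fun y hy => ?_⟩
      by_cases h : y = u
      exacts [h ▸ le_rfl, (hfu y hy h).le]
    · by_contra h
      exact (hfv x hx.1 h).not_ge (hx.2 v hv)
    · refine Set.singleton_subset_iff.2 ⟨hv, fun y hy => ?_⟩
      by_cases h : y = v
      exacts [h ▸ le_rfl, (hfv y hy h).le]

theorem StrictlyAntipodal.symm {u v : Pt D} (h : StrictlyAntipodal Q u v) :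
    StrictlyAntipodal Q v u := by
  rw [strictlyAntipodal_iff] at h ⊢
  obtain ⟨f, hf, hu, hv, hfu, hfv⟩ := h
  refine ⟨-f, neg_ne_zero.2 hf, hv, hu, fun y hy hyv => ?_, fun y hy hyu => ?_⟩
  · simpa using hfv y hy hyv
  · simpa using hfu y hy hyu

theorem mem_suppCone_sub_singleton {v x : Pt D} :
    x ∈ suppCone Q v - ({v} : Set (Pt D)) ↔ ∃ l : ℝ, 0 ≤ l ∧ ∃ q ∈ Q, x = l • (q - v) := by
  have : x ∈ suppCone Q v - ({v} : Set (Pt D)) ↔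
      x ∈ ⋃ (l : ℝ) (_ : 0 ≤ l), l • (Q - ({v} : Set (Pt D))) := by
    rw [suppCone, Set.sub_singleton, Set.singleton_add]
    constructor
    · rintro ⟨_, ⟨z, hz, rfl⟩, rfl⟩
      simpa using hz
    · exact fun h => ⟨_, ⟨x, h, rfl⟩, by simp⟩
  rw [this]
  simp only [Set.mem_iUnion, exists_prop]
  refine exists_congr fun l => and_congr_right fun _ => ?_
  rw [Set.sub_singleton]
  constructor
  · rintro ⟨_, ⟨q, hq, rfl⟩, rfl⟩
    exact ⟨q, hq, rfl⟩
  · rintro ⟨q, hq, rfl⟩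
    exact ⟨_, ⟨q, hq, rfl⟩, rfl⟩

theorem mem_singleton_sub_suppCone {v x : Pt D} :
    x ∈ ({v} : Set (Pt D)) - suppCone Q v ↔ ∃ l : ℝ, 0 ≤ l ∧ ∃ q ∈ Q, -x = l • (q - v) := by
  rw [← mem_suppCone_sub_singleton, Set.singleton_sub, Set.sub_singleton]
  constructor
  · rintro ⟨y, hy, rfl⟩
    exact ⟨y, hy, by simp⟩
  · rintro ⟨y, hy, h⟩
    refine ⟨y, hy, ?_⟩
    rw [← neg_eq_iff_eq_neg.2 h, neg_sub]

/-- A vertex whose supporting cone is the reflection of that of `s` can be strictly antipodal only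
to `s`. -/
theorem StrictlyAntipodal.eq_of_suppCone_eq {v s w : Pt D} (hs : s ∈ Q)
    (hcone : suppCone Q v - ({v} : Set (Pt D)) = ({s} : Set (Pt D)) - suppCone Q s)
    (h : StrictlyAntipodal Q v w) : w = s := by
  obtain ⟨f, -, hv, hw, hfv, hfw⟩ := strictlyAntipodal_iff.1 h
  by_contra hws
  have hlt : f w < f s := hfw s hs (Ne.symm hws)
  have hmem : s - w ∈ ({s} : Set (Pt D)) - suppCone Q s :=
    mem_singleton_sub_suppCone.2 ⟨1, zero_le_one, w, hw, by simp⟩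
  rw [← hcone, mem_suppCone_sub_singleton] at hmem
  obtain ⟨l, hl, q, hq, hlq⟩ := hmem
  have hf := congrArg f hlq
  rw [map_sub, map_smul, map_sub, smul_eq_mul] at hf
  have hqv : f q ≤ f v := by
    by_cases hqv : q = v
    exacts [hqv ▸ le_rfl, (hfv q hq hqv).le]
  nlinarith

/-- A functional which is strictly maximized at a vertex `v` over the vertices can be perturbed
so that all small perturbations exhibit `v` as a member of a strictly antipodal pair. -/
theorem IsPolytope.exists_eventually_strictlyAntipodal (hQ : IsPolytope Q) {v : Pt D}
    (hv : v ∈ Set.extremePoints ℝ Q) (hne : (Set.extremePoints ℝ Q \ {v}).Nonempty)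
    {f : Pt D →ₗ[ℝ] ℝ} (hf : ∀ w ∈ Set.extremePoints ℝ Q, w ≠ v → f w < f v) :
    ∃ g : Pt D →ₗ[ℝ] ℝ, ∀ᶠ ε in 𝓝[>] (0 : ℝ), ∃ w ∈ Set.extremePoints ℝ Q, v ≠ w ∧
      StrictlyAntipodal Q v w ∧
      ∀ y ∈ Set.extremePoints ℝ Q, (f + ε • g) w ≤ (f + ε • g) y := by
  have hfin := hQ.finite_extremePoints
  obtain ⟨g, hg⟩ := exists_eventually_injOn_add_smul hfin f
  refine ⟨g, ?_⟩
  filter_upwards [hg, eventually_lt_add_smul hfin hf g] with ε hinj hmax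
  generalize f + ε • g = h at hinj hmax
  obtain ⟨w, hw, hmin⟩ := Set.exists_min_image _ h hfin ⟨v, hv⟩
  obtain ⟨z, hz, hzv⟩ := hne
  have hzlt := hmax z hz hzv
  refine ⟨w, hw, ?_, strictlyAntipodal_iff.2 ⟨h, ?_, hv.1, hw.1, ?_, ?_⟩, hmin⟩
  · rintro rfl
    exact hzlt.not_ge (hmin z hz)
  · rintro rfl
    simp at hzlt
  · intro y hy hyv
    rw [← hQ.convexHull_extremePoints] at hy
    exact lt_of_mem_convexHull_of_forall_lt hmax hy hyv
  · intro y hy hyw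
    rw [← hQ.convexHull_extremePoints] at hy
    have hmin' : ∀ x ∈ Set.extremePoints ℝ Q, x ≠ w → (-h) x < (-h) w := fun x hx hxw =>
      neg_lt_neg ((hmin x hx).lt_of_ne fun heq => hxw (hinj hw hx heq).symm)
    exact neg_lt_neg_iff.1 (lt_of_mem_convexHull_of_forall_lt hmin' hy hyw)

/-- Every vertex of a polytope that is not a point belongs to a strictly antipodal pair. -/
theorem IsPolytope.exists_strictlyAntipodal (hQ : IsPolytope Q) {v : Pt D}
    (hv : v ∈ Set.extremePoints ℝ Q) (hne : (Set.extremePoints ℝ Q \ {v}).Nonempty) :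
    ∃ w ∈ Set.extremePoints ℝ Q, v ≠ w ∧ StrictlyAntipodal Q v w := by
  obtain ⟨f, hf⟩ := exists_strict_max hQ.finite_extremePoints
    (hQ.notMem_convexHull_extremePoints_sdiff hv)
  obtain ⟨g, hg⟩ := hQ.exists_eventually_strictlyAntipodal hv hne hf
  obtain ⟨ε, w, hw, hvw, hsa, -⟩ := hg.exists
  exact ⟨w, hw, hvw, hsa⟩

/-- If `s` is the only vertex strictly antipodal to `v`, then the cone at `s` is contained in the
reflection of the cone at `v`. -/
theorem IsPolytope.neg_mem_suppCone_sub (hQ : IsPolytope Q) {v s : Pt D}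
    (hv : v ∈ Set.extremePoints ℝ Q) (hne : (Set.extremePoints ℝ Q \ {v}).Nonempty)
    (huniq : ∀ w ∈ Set.extremePoints ℝ Q, v ≠ w → StrictlyAntipodal Q v w → w = s) {x : Pt D}
    (hx : x ∈ suppCone Q s - ({s} : Set (Pt D))) :
    -x ∈ suppCone Q v - ({v} : Set (Pt D)) := by
  by_contra hcon
  rw [mem_suppCone_sub_singleton] at hx hcon
  push Not at hcon
  obtain ⟨l, hl, q, hq, rfl⟩ := hx
  obtain ⟨f, hf, hpos⟩ := exists_strict_max_pos hQ.finite_extremePoints hne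
    (hQ.notMem_convexHull_extremePoints_sdiff hv) (x := -(l • (q - s)))
    (by rwa [hQ.convexHull_extremePoints])
  obtain ⟨g, hg⟩ := hQ.exists_eventually_strictlyAntipodal hv hne hf
  have hmin : ∀ y ∈ Set.extremePoints ℝ Q, f s ≤ f y := by
    intro y hy
    refine le_of_tendsto_of_tendsto (tendsto_add_smul_apply f g s)
      (tendsto_add_smul_apply f g y) ?_
    filter_upwards [hg] with ε hε
    obtain ⟨w, hw, hvw, hsa, hle⟩ := hε
    rw [← huniq w hw hvw hsa]
    exact hle y hy
  have hsq : f s ≤ f q := by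
    rw [← hQ.convexHull_extremePoints] at hq
    exact convexHull_min hmin (convex_halfSpace_ge f.isLinear (f s)) hq
  rw [map_neg, map_smul, map_sub, smul_eq_mul] at hpos
  nlinarith

/-- Local point symmetry means that every vertex has exactly one strictly antipodal partner. -/
theorem IsPolytope.locallyPointSymmetric_iff (hQ : IsPolytope Q) :
    LocallyPointSymmetric Q ↔ ∀ u ∈ Set.extremePoints ℝ Q,
      ∃! v, v ∈ Set.extremePoints ℝ Q ∧ u ≠ v ∧ StrictlyAntipodal Q u v := by
  constructor
  · rintro ⟨σ, hσ⟩ u hu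
    obtain ⟨hmem, hne, -, hsa, hcone⟩ := hσ u hu
    exact ⟨σ u, ⟨hmem, hne.symm, hsa⟩, fun w hw => hw.2.2.eq_of_suppCone_eq hmem.1 hcone⟩
  · intro h
    choose! σ hσ huniq using h
    have hinv : ∀ v ∈ Set.extremePoints ℝ Q, σ (σ v) = v := fun v hv =>
      (huniq (σ v) (hσ v hv).1 v ⟨hv, (hσ v hv).2.1.symm, (hσ v hv).2.2.symm⟩).symm
    have hsub : ∀ v ∈ Set.extremePoints ℝ Q, ∀ x ∈ suppCone Q (σ v) - ({σ v} : Set (Pt D)),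
        -x ∈ suppCone Q v - ({v} : Set (Pt D)) := fun v hv x hx =>
      hQ.neg_mem_suppCone_sub hv ⟨σ v, (hσ v hv).1, (hσ v hv).2.1.symm⟩
        (fun w hw hvw hsa => huniq v hv w ⟨hw, hvw, hsa⟩) hx
    refine ⟨σ, fun v hv => ⟨(hσ v hv).1, (hσ v hv).2.1.symm, hinv v hv, (hσ v hv).2.2, ?_⟩⟩
    ext x
    rw [mem_singleton_sub_suppCone, ← mem_suppCone_sub_singleton]
    constructor
    · intro hx
      refine hsub (σ v) (hσ v hv).1 x ?_
      rwa [hinv v hv]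
    · intro hx
      simpa using hsub v hv (-x) hx

end Polytopes

/-- A full-dimensional convex polytope `Q ⊆ ℝ^D` with `m` vertices is
locally point symmetric if and only if it has exactly `m/2` pairs of strictly antipodal
vertices. -/
theorem stmt9 {D : ℕ} (Q : Set (Pt D)) (hQ : IsPolytope Q)
    (hfull : affineSpan ℝ Q = ⊤) (m : ℕ) (hm : (Set.extremePoints ℝ Q).ncard = m) :
    LocallyPointSymmetric Q ↔
      2 * ({p : Set (Pt D) | ∃ u v : Pt D, u ≠ v ∧ u ∈ Set.extremePoints ℝ Q ∧
        v ∈ Set.extremePoints ℝ Q ∧ StrictlyAntipodal Q u v ∧ p = {u, v}}).ncard = m := by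
  have hcount := two_mul_ncard_pairs_eq_iff hQ.finite_extremePoints
    (r := StrictlyAntipodal Q) fun _ _ h => h.symm
  rw [hQ.locallyPointSymmetric_iff, ← hm]
  refine ⟨hcount.1, fun h => hcount.2 h fun v hv => hQ.exists_strictlyAntipodal hv ?_⟩
  by_contra hempty
  have hsingle : Set.extremePoints ℝ Q = {v} :=
    (Set.sdiff_eq_empty.1 (Set.not_nonempty_iff_eq_empty.1 hempty)).antisymm
      (Set.singleton_subset_iff.2 hv)
  rw [hsingle, Set.ncard_singleton] at h
  omega
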